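/- Let W be a Coxeter group whose Coxeter diagram is the star with center v₀, leaves a and b, and a path v₀—v₁—⋯—v_{n−1}—v_n where the last edge {v_{n−1},v_n} has weight 4 and all other edges have weight 3 (the affine B-type diagram). Then for every k ≥ 1 the word w_k = (a b v₀ v₁ ⋯ v_{n−1} v_n v_{n−1} ⋯ v₁ v₀)^k is a reduced word of a fully commutative element, and the maximum antichain size of its heap is n(w_k) = 2. -/

import Mathlib

open CoxeterSystem

def CommStep {B : Type*} (M : CoxeterMatrix B) (l l' : List B) : Prop :=
  ∃ (u v : List B) (a b : B), M a b = 2 ∧ l = u ++ a :: b :: v ∧ l' = u ++ b :: a :: v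

def CommEquiv {B : Type*} (M : CoxeterMatrix B) : List B → List B → Prop :=
  Relation.ReflTransGen fun l l' => CommStep M l l' ∨ CommStep M l' l

def FullyCommutative {B W : Type*} [Group W] {M : CoxeterMatrix B}
    (cs : CoxeterSystem M W) (w : W) : Prop :=
  ∀ l l', cs.IsReduced l → cs.wordProd l = w → cs.IsReduced l' → cs.wordProd l' = w →
    CommEquiv M l l'

def heapLe {B : Type*} (M : CoxeterMatrix B) (ω : List B) :
    Fin ω.length → Fin ω.length → Prop :=
  Relation.ReflTransGen fun i j => (i : ℕ) < (j : ℕ) ∧ M (ω.get i) (ω.get j) ≠ 2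

def IsHeapAntichain {B : Type*} (M : CoxeterMatrix B) (ω : List B)
    (A : Finset (Fin ω.length)) : Prop :=
  ∀ i ∈ A, ∀ j ∈ A, i ≠ j → ¬ heapLe M ω i j

noncomputable def heapN {B : Type*} (M : CoxeterMatrix B) (ω : List B) : ℕ :=
  sSup {n | ∃ A : Finset (Fin ω.length), IsHeapAntichain M ω A ∧ A.card = n}

namespace CoxeterMatrix

variable {B : Type*} (M : CoxeterMatrix B)

/-- Twice the linear form `B(eᵢ, ·)` of the geometric representation,
where `B(eᵢ, eⱼ) = -cos (π / M i j)`. -/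
noncomputable def geomForm (i : B) : Module.Dual ℝ (B →₀ ℝ) :=
  Finsupp.linearCombination ℝ fun j => -2 * Real.cos (Real.pi / M i j)

theorem geomForm_single (i j : B) :
    M.geomForm i (Finsupp.single j 1) = -2 * Real.cos (Real.pi / M i j) := by
  simp [geomForm]

theorem geomForm_self (i : B) : M.geomForm i (Finsupp.single i 1) = 2 := by
  simp [geomForm_single]

/-- The simple reflections of the geometric representation. -/
noncomputable def geomReflection (i : B) : (B →₀ ℝ) ≃ₗ[ℝ] (B →₀ ℝ) :=
  Module.reflection (M.geomForm_self i)

theorem geomForm_mul_sub_two (i j : B) :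
    M.geomForm i (Finsupp.single j 1) * M.geomForm j (Finsupp.single i 1) - 2 =
      2 * Real.cos (2 * Real.pi / M i j) := by
  rw [geomForm_single, geomForm_single, M.symmetric j i,
    show 2 * Real.pi / (M i j : ℝ) = 2 * (Real.pi / M i j) by ring, Real.cos_two_mul]
  ring

theorem sin_two_pi_div_pos {m : ℕ} (hm : 3 ≤ m) : 0 < Real.sin (2 * Real.pi / m) := by
  have h3 : (3 : ℝ) ≤ m := by exact_mod_cast hm
  apply Real.sin_pos_of_pos_of_lt_pi
  · positivity
  · rw [div_lt_iff₀ (by linarith)]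
    nlinarith [Real.pi_pos]

open Polynomial.Chebyshev in
theorem geomReflection_isLiftable : M.IsLiftable M.geomReflection := by
  intro i j
  rcases eq_or_ne (M i j) 0 with h0 | h0
  · simp [h0]
  rcases eq_or_ne (M i j) 1 with h1 | h1
  · obtain rfl : i = j := by
      by_contra h
      exact M.off_diagonal i j h h1
    rw [h1, pow_one]
    ext1 z
    rw [LinearEquiv.mul_apply, geomReflection, Module.reflection_apply, Module.reflection_apply]
    simp only [map_sub, map_smul, geomForm_self, smul_eq_mul, LinearEquiv.coe_one, id_eq]
    module
  ext1 z
  have key := Module.reflection_mul_reflection_pow_apply (M.geomForm_self i) (M.geomForm_self j)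
    (M i j) z (2 * Real.cos (2 * Real.pi / M i j)) (M.geomForm_mul_sub_two i j).symm
  change ((Module.reflection (M.geomForm_self i) * Module.reflection (M.geomForm_self j)) ^ M i j) z
    = z
  rw [key]
  generalize hm : M i j = m at *
  rcases eq_or_ne m 2 with rfl | h2
  · simp [geomForm_single, hm, M.symmetric j i]
    norm_num
    abel
  have hs := (sin_two_pi_div_pos (show 3 ≤ m by omega)).ne'
  set φ := 2 * Real.pi / m with hφ
  have hmφ : m * φ = 2 * Real.pi := by
    rw [hφ]; field_simp
  obtain ⟨p, rfl | rfl⟩ := Nat.even_or_odd' m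
  · have hS : (S ℝ ((p : ℤ) - 1)).eval (2 * Real.cos φ) = 0 := by
      have := S_two_mul_real_cos φ ((p : ℤ) - 1)
      have hp : ((((p : ℤ) - 1 : ℤ) : ℝ) + 1) * φ = Real.pi := by
        push_cast at hmφ ⊢
        linarith
      rw [hp, Real.sin_pi] at this
      exact (mul_eq_zero.1 this).resolve_right hs
    rw [show (((2 * p : ℕ) : ℤ) - 2) / 2 = (p : ℤ) - 1 by omega,
      show (((2 * p : ℕ) : ℤ) - 1) / 2 = (p : ℤ) - 1 by omega, hS]
    simp
  · have hS : (S ℝ (p : ℤ)).eval (2 * Real.cos φ) +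
        (S ℝ ((p : ℤ) - 1)).eval (2 * Real.cos φ) = 0 := by
      have e1 := S_two_mul_real_cos φ ((p : ℤ) - 1)
      have e2 := S_two_mul_real_cos φ (p : ℤ)
      have hp : (((p : ℤ) : ℝ) + 1) * φ = 2 * Real.pi - p * φ := by
        push_cast at hmφ ⊢
        linarith
      have hq : ((((p : ℤ) - 1 : ℤ) : ℝ) + 1) * φ = p * φ := by push_cast; ring
      rw [hp, Real.sin_two_pi_sub] at e2
      rw [hq] at e1
      have : ((S ℝ (p : ℤ)).eval (2 * Real.cos φ) +
        (S ℝ ((p : ℤ) - 1)).eval (2 * Real.cos φ)) * Real.sin φ = 0 := by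
        rw [add_mul, e1, e2]; ring
      exact (mul_eq_zero.1 this).resolve_right hs
    rw [show (((2 * p + 1 : ℕ) : ℤ) - 2) / 2 = (p : ℤ) - 1 by omega,
      show (((2 * p + 1 : ℕ) : ℤ) - 1) / 2 = (p : ℤ) by omega,
      show (((2 * p + 1 : ℕ) : ℤ) - 3) / 2 = (p : ℤ) - 1 by omega,
      show (((2 * p + 1 : ℕ) : ℤ)) / 2 = (p : ℤ) by omega, hS]
    simp

open Polynomial.Chebyshev in
theorem dvd_of_geomReflection_pow_eq_one {i j : B} {k : ℕ}
    (h : (M.geomReflection i * M.geomReflection j) ^ k = 1) : M i j ∣ k := by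
  rcases eq_or_ne i j with rfl | hij
  · simp
  have key := Module.reflection_mul_reflection_pow_apply_self (M.geomForm_self i)
    (M.geomForm_self j) k (2 * Real.cos (2 * Real.pi / M i j)) (M.geomForm_mul_sub_two i j).symm
  change ((M.geomReflection i * M.geomReflection j) ^ k) _ = _ at key
  rw [h] at key
  have hi := DFunLike.congr_fun key i
  have hj := DFunLike.congr_fun key j
  simp only [LinearEquiv.coe_one, id_eq, Finsupp.add_apply, Finsupp.smul_apply,
    Finsupp.single_eq_same, Finsupp.single_eq_of_ne hij, Finsupp.single_eq_of_ne hij.symm,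
    smul_eq_mul, mul_one, mul_zero, add_zero, zero_add, geomForm_single, M.symmetric j i]
    at hi hj
  have h1 := M.off_diagonal i j hij
  generalize hm : M i j = m at *
  rcases eq_or_ne m 0 with rfl | h0
  · simp at hj
    simpa using hj
  rcases eq_or_ne m 2 with rfl | h2
  · simp only [Nat.cast_ofNat, mul_div_cancel_left₀ _ (two_ne_zero (α := ℝ)), Real.cos_pi,
      mul_neg, mul_one, S_eval_neg_two, Int.negOnePow_sub, Int.negOnePow_one] at hi
    rcases Nat.even_or_odd k with hk | hk
    · exact hk.two_dvd
    · rw [Int.negOnePow_odd _ (by exact_mod_cast hk)] at hi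
      push_cast at hi
      linarith
  have hm3 : 3 ≤ m := by omega
  have hmr : (3 : ℝ) ≤ m := by exact_mod_cast hm3
  have hs := (sin_two_pi_div_pos hm3).ne'
  have hc : 0 < Real.cos (Real.pi / m) := by
    apply Real.cos_pos_of_mem_Ioo
    constructor
    · have : 0 < Real.pi / m := by positivity
      linarith [Real.pi_pos]
    · rw [div_lt_div_iff₀ (by linarith) (by norm_num)]
      nlinarith [Real.pi_pos]
  have hS : (S ℝ ((k : ℤ) - 1)).eval (2 * Real.cos (2 * Real.pi / m)) = 0 := by
    rcases mul_eq_zero.1 hj.symm with h | h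
    · exact h
    · linarith
  rw [hS, add_zero] at hi
  set φ := 2 * Real.pi / m with hφ
  have e1 := S_two_mul_real_cos φ ((k : ℤ) - 1)
  have e2 := S_two_mul_real_cos φ (k : ℤ)
  rw [hS] at e1
  rw [← hi] at e2
  have hq : ((((k : ℤ) - 1 : ℤ) : ℝ) + 1) * φ = k * φ := by push_cast; ring
  rw [hq, zero_mul] at e1
  have hp : (((k : ℤ) : ℝ) + 1) * φ = k * φ + φ := by push_cast; ring
  rw [hp, Real.sin_add, ← e1, zero_mul, zero_add, one_mul] at e2
  have hcos : Real.cos (k * φ) = 1 := by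
    have := mul_right_cancel₀ hs (e2.symm.trans (one_mul _).symm)
    exact this
  obtain ⟨r, hr⟩ := (Real.cos_eq_one_iff _).1 hcos
  have : (k : ℝ) = r * m := by
    rw [hφ] at hr
    field_simp at hr
    linarith
  have : (k : ℤ) = r * m := by exact_mod_cast this
  exact Int.natCast_dvd_natCast.1 ⟨r, by rw [this, mul_comm]⟩

end CoxeterMatrix

namespace CoxeterSystem

variable {B W : Type*} [Group W] {M : CoxeterMatrix B} (cs : CoxeterSystem M W)

/-- The order of `sᵢ sⱼ` is divisible by `M i j`. -/
theorem dvd_of_simple_mul_simple_pow_eq_one {i j : B} {k : ℕ}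
    (h : (cs.simple i * cs.simple j) ^ k = 1) : M i j ∣ k := by
  apply M.dvd_of_geomReflection_pow_eq_one
  have := congrArg (cs.lift ⟨M.geomReflection, M.geomReflection_isLiftable⟩) h
  simpa only [map_pow, map_mul, map_one, lift_apply_simple] using this

open Classical in
/-- The action of a simple reflection on `W × ℤ/2`: conjugation on the first factor, with the sign
flipped at the simple reflection itself. -/
noncomputable def signedConj (i : B) : Function.End (W × ZMod 2) := fun p =>
  (cs.simple i * p.1 * cs.simple i, p.2 + if p.1 = cs.simple i then 1 else 0)

open Classical in
theorem prod_map_signedConj_apply (ω : List B) (p : W × ZMod 2) :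
    (ω.map cs.signedConj).prod p =
      (cs.wordProd ω * p.1 * (cs.wordProd ω)⁻¹, p.2 + ((cs.rightInvSeq ω).count p.1 : ℕ)) := by
  induction ω with
  | nil => simp [Function.End.one_def]
  | cons i ω ih =>
    rw [List.map_cons, List.prod_cons]
    change cs.signedConj i ((ω.map cs.signedConj).prod p) = _
    rw [ih, signedConj]
    ext
    · simp [wordProd_cons, mul_assoc]
    · have : cs.wordProd ω * p.1 * (cs.wordProd ω)⁻¹ = cs.simple i ↔
          (cs.wordProd ω)⁻¹ * cs.simple i * cs.wordProd ω = p.1 := by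
        rw [mul_inv_eq_iff_eq_mul, mul_assoc, inv_mul_eq_iff_eq_mul, eq_comm]
      simp only [rightInvSeq, List.count_cons, beq_iff_eq, this]
      split_ifs <;> push_cast <;> ring

theorem prod_map_reverse_alternatingWord {G : Type*} [Monoid G] (f : B → G) (i j : B) (m : ℕ) :
    ((alternatingWord j i (2 * m)).reverse.map f).prod = (f i * f j) ^ m := by
  induction m with
  | zero => simp [alternatingWord]
  | succ m ih =>
    rw [show 2 * (m + 1) = 2 * m + 1 + 1 by ring, alternatingWord_succ, alternatingWord_succ]
    simp only [List.concat_eq_append, List.reverse_append, List.reverse_cons, List.reverse_nil,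
      List.nil_append, List.map_append, List.map_cons, List.map_nil, List.prod_append,
      List.prod_singleton, ih, pow_succ', mul_assoc]

theorem leftInvSeq_alternatingWord (i j : B) (p : ℕ) :
    cs.leftInvSeq (alternatingWord i j (2 * p)) =
      (List.range (2 * p)).map fun k => cs.wordProd (alternatingWord j i (2 * k + 1)) := by
  apply List.ext_getElem
  · simp
  · intro k h _
    simp only [length_leftInvSeq, length_alternatingWord] at h
    simp [cs.getElem_leftInvSeq_alternatingWord i j p k h]

open Classical in
theorem even_count_leftInvSeq_alternatingWord (i j : B) (t : W) :
    Even ((cs.leftInvSeq (alternatingWord i j (2 * M i j))).count t) := by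
  have hper : ∀ k, cs.wordProd (alternatingWord j i (2 * (M i j + k) + 1)) =
      cs.wordProd (alternatingWord j i (2 * k + 1)) := by
    intro k
    have h1 : ∀ r : ℕ, ¬ Even (2 * r + 1) := fun r => by simp
    have h2 : ∀ r : ℕ, (2 * r + 1) / 2 = r := fun r => by omega
    simp only [prod_alternatingWord_eq_mul_pow, h1, h2, if_false, pow_add, simple_mul_simple_pow',
      one_mul]
  rw [leftInvSeq_alternatingWord, two_mul, List.range_add, List.map_append, List.map_map,
    List.count_append]
  simp only [Function.comp_def, hper]
  exact ⟨_, rfl⟩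

theorem signedConj_isLiftable : M.IsLiftable cs.signedConj := by
  classical
  intro i j
  rw [← prod_map_reverse_alternatingWord]
  funext p
  rw [prod_map_signedConj_apply, rightInvSeq_reverse, List.count_reverse, M.symmetric i j,
    (ZMod.natCast_eq_zero_iff_even).2 (cs.even_count_leftInvSeq_alternatingWord j i p.1),
    wordProd_reverse, prod_alternatingWord_eq_mul_pow]
  simp [Function.End.one_def]

open Classical in
/-- The parity of the number of occurrences of an element in a right inversion sequence depends
only on the product of the word. -/
theorem count_rightInvSeq_congr {ω ω' : List B} (h : cs.wordProd ω = cs.wordProd ω') (t : W) :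
    (((cs.rightInvSeq ω).count t : ℕ) : ZMod 2) = ((cs.rightInvSeq ω').count t : ℕ) := by
  have key : ∀ ω, (ω.map cs.signedConj).prod =
      cs.lift ⟨_, cs.signedConj_isLiftable⟩ (cs.wordProd ω) := by
    intro ω
    rw [wordProd, map_list_prod, List.map_map]
    congr 1
    apply List.map_congr_left
    intro i _
    simp
  have h2 := (key ω).trans ((congrArg _ h).trans (key ω').symm)
  have h3 := congrFun h2 (t, 0)
  rw [prod_map_signedConj_apply, prod_map_signedConj_apply] at h3
  simpa using congrArg Prod.snd h3

theorem exists_eq_append_of_mem_rightInvSeq {ω : List B} {t : W} (h : t ∈ cs.rightInvSeq ω) :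
    ∃ u x v, ω = u ++ x :: v ∧ cs.wordProd (x :: v) * t = cs.wordProd v := by
  induction ω with
  | nil => simp at h
  | cons i ω ih =>
    rcases List.mem_cons.1 h with rfl | h
    · exact ⟨[], i, ω, rfl, by simp [wordProd_cons, mul_assoc]⟩
    · obtain ⟨u, x, v, rfl, hv⟩ := ih h
      exact ⟨i :: u, x, v, rfl, hv⟩

/-- The exchange property. -/
theorem IsRightDescent.exists_eq_append {cs : CoxeterSystem M W} {ω : List B} {i : B}
    (h : cs.IsRightDescent (cs.wordProd ω) i) :
    ∃ u x v, ω = u ++ x :: v ∧ cs.wordProd (x :: v) * cs.simple i = cs.wordProd v := by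
  classical
  apply cs.exists_eq_append_of_mem_rightInvSeq
  obtain ⟨ω', hω', hprod⟩ := cs.exists_isReduced (cs.wordProd ω * cs.simple i)
  have hω : cs.wordProd ω = cs.wordProd (ω'.concat i) := by
    rw [wordProd_concat, ← hprod, simple_mul_simple_cancel_right]
  have hcount := cs.count_rightInvSeq_congr hω (cs.simple i)
  have hnot : cs.simple i ∉ (cs.rightInvSeq ω').map (MulAut.conj (cs.simple i)) := by
    intro hmem
    obtain ⟨t, ht, hti⟩ := List.mem_map.1 hmem
    obtain rfl : t = cs.simple i := by
      apply (MulAut.conj (cs.simple i)).injective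
      simpa using hti
    have h1 := (cs.isRightInversion_of_mem_rightInvSeq hω' ht).2
    rw [← hprod, simple_mul_simple_cancel_right] at h1
    exact lt_asymm h h1
  rw [rightInvSeq_concat, List.concat_eq_append, List.count_append,
    List.count_eq_zero_of_not_mem hnot] at hcount
  by_contra hmem
  rw [List.count_eq_zero_of_not_mem hmem] at hcount
  simp at hcount

variable {cs}

theorem eq_alternatingWord_of_eq_append {i j : B} {p : ℕ} {u v : List B}
    (h : alternatingWord i j p = u ++ v) : v = alternatingWord i j v.length := by
  induction p generalizing u with
  | zero =>
    obtain ⟨-, rfl⟩ := List.append_eq_nil_iff.1 h.symm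
    rfl
  | succ p ih =>
    cases u with
    | nil =>
      have := congrArg List.length h
      simp only [length_alternatingWord, List.nil_append] at this h
      rw [← this, h]
    | cons c u =>
      rw [alternatingWord_succ', List.cons_append, List.cons.injEq] at h
      exact ih h.2

theorem simple_mul_simple_pow_eq_one_of_wordProd_alternatingWord {i j : B} {r : ℕ}
    (h : cs.wordProd (alternatingWord i j (r + 2)) = cs.wordProd (alternatingWord j i r)) :
    (cs.simple i * cs.simple j) ^ (r + 1) = 1 := by
  have hinv : (cs.simple i * cs.simple j)⁻¹ = cs.simple j * cs.simple i := by simp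
  simp only [prod_alternatingWord_eq_mul_pow, ← hinv, inv_pow] at h
  obtain ⟨q, rfl | rfl⟩ := Nat.even_or_odd' r
  · have h2 : (2 * q + 2) / 2 = q + 1 := by omega
    have h3 : 2 * q / 2 = q := by omega
    have h4 : Even (2 * q) := by simp
    have h5 : Even (2 * q + 2) := by simp [parity_simps]
    simp only [h2, h3, h4, h5, if_true, one_mul] at h
    rw [eq_inv_iff_mul_eq_one, ← pow_add] at h
    rw [← h]
    congr 1
    omega
  · have h2 : (2 * q + 1 + 2) / 2 = q + 1 := by omega
    have h3 : (2 * q + 1) / 2 = q := by omega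
    have h4 : ¬ Even (2 * q + 1) := by simp
    have h5 : ¬ Even (2 * q + 1 + 2) := by simp [parity_simps]
    simp only [h2, h3, h4, h5, if_false] at h
    rw [eq_mul_inv_iff_mul_eq, mul_assoc, ← pow_add] at h
    have h6 : cs.simple i * (cs.simple j * (cs.simple i * cs.simple j) ^ (q + 1 + q)) = 1 := by
      rw [h, simple_mul_simple_self]
    rw [← h6, ← mul_assoc, ← pow_succ']
    congr 1
    omega

theorem exists_isReduced_append_alternatingWord {w : W} {i j : B} (hi : cs.IsRightDescent w i)
    (hj : cs.IsRightDescent w j) {p : ℕ} (hp : M i j ≠ 0 → p ≤ M i j) :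
    ∃ u, cs.IsReduced (u ++ alternatingWord i j p) ∧
      cs.wordProd (u ++ alternatingWord i j p) = w := by
  induction p generalizing i j with
  | zero =>
    obtain ⟨u, hu, rfl⟩ := cs.exists_isReduced w
    exact ⟨u, by simpa [alternatingWord] using hu, by simp [alternatingWord]⟩
  | succ p ih =>
    obtain ⟨u, hu, rfl⟩ := ih hj hi fun h => by
      rw [M.symmetric] at h ⊢
      exact (Nat.le_succ p).trans (hp h)
    obtain ⟨u₁, x, v, huv, hv⟩ := hj.exists_eq_append
    have hsuffix : ∀ c, alternatingWord j i p ≠ c ++ x :: v := by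
      intro c hc
      have h1 := eq_alternatingWord_of_eq_append hc
      have h2 := eq_alternatingWord_of_eq_append (hc.trans (List.append_cons c x v))
      have hlen := congrArg List.length hc
      simp only [List.length_cons, length_alternatingWord, List.length_append] at h1 hlen
      generalize v.length = r at *
      rw [h1, h2, ← wordProd_concat, ← alternatingWord_succ] at hv
      have hdvd := cs.dvd_of_simple_mul_simple_pow_eq_one
        (simple_mul_simple_pow_eq_one_of_wordProd_alternatingWord hv)
      have h3 : M i j ≠ 0 := by
        intro h0
        rw [h0, zero_dvd_iff] at hdvd
        omega
      have := Nat.le_of_dvd (by omega) hdvd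
      have := hp h3
      omega
    rcases List.append_eq_append_iff.1 huv with ⟨c, rfl, hc⟩ | ⟨c, rfl, hc⟩
    · exact (hsuffix c hc).elim
    · rcases c with _ | ⟨y, c⟩
      · exact (hsuffix [] hc.symm).elim
      · obtain ⟨rfl, rfl⟩ := List.cons.inj hc
        refine ⟨u₁ ++ c, ?_⟩
        change cs.wordProd (x :: (c ++ alternatingWord j i p)) * cs.simple j =
          cs.wordProd (c ++ alternatingWord j i p) at hv
        have hprod : cs.wordProd (u₁ ++ c ++ alternatingWord i j (p + 1)) =
            cs.wordProd (u₁ ++ x :: c ++ alternatingWord j i p) := by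
          rw [alternatingWord_succ, List.append_assoc, List.concat_eq_append,
            ← List.append_assoc c, ← List.concat_eq_append, wordProd_append,
            wordProd_concat, ← hv, simple_mul_simple_cancel_right, List.append_assoc,
            wordProd_append, List.cons_append]
        refine ⟨?_, hprod⟩
        rw [IsReduced, hprod, hu]
        simp
        omega

theorem exists_isReduced_append_braidWord {w : W} {i j : B} (hi : cs.IsRightDescent w i)
    (hj : cs.IsRightDescent w j) :
    M i j ≠ 0 ∧ ∃ u, cs.IsReduced (u ++ braidWord M i j) ∧
      cs.wordProd (u ++ braidWord M i j) = w := by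
  refine ⟨fun h => ?_, exists_isReduced_append_alternatingWord hi hj fun _ => le_rfl⟩
  obtain ⟨u, hu, hw⟩ := exists_isReduced_append_alternatingWord (p := cs.length w + 1) hi hj
    fun h' => absurd h h'
  rw [IsReduced, hw, List.length_append, length_alternatingWord] at hu
  omega

theorem IsReduced.isRightDescent_concat {l : List B} {i : B} (h : cs.IsReduced (l ++ [i])) :
    cs.IsRightDescent (cs.wordProd (l ++ [i])) i := by
  rw [IsRightDescent, h, wordProd_append, wordProd_singleton, simple_mul_simple_cancel_right]
  have := cs.length_wordProd_le l
  simp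
  omega

end CoxeterSystem

section CommEquiv

variable {B : Type*} {M : CoxeterMatrix B} {l l' l'' : List B}

theorem CommStep.symm (h : CommStep M l l') : CommStep M l' l := by
  obtain ⟨u, v, a, b, hab, rfl, rfl⟩ := h
  exact ⟨u, v, b, a, by rwa [M.symmetric], rfl, rfl⟩

theorem CommEquiv.symm (h : CommEquiv M l l') : CommEquiv M l' l := by
  induction h with
  | refl => exact .refl
  | tail _ h ih => exact Relation.ReflTransGen.head h.symm ih

theorem CommEquiv.trans (h : CommEquiv M l l') (h' : CommEquiv M l' l'') : CommEquiv M l l'' :=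
  Relation.ReflTransGen.trans h h'

theorem CommEquiv.append_right (h : CommEquiv M l l') (r : List B) :
    CommEquiv M (l ++ r) (l' ++ r) := by
  have step : ∀ l l', CommStep M l l' → CommStep M (l ++ r) (l' ++ r) := by
    rintro _ _ ⟨u, v, a, b, hab, rfl, rfl⟩
    exact ⟨u, v ++ r, a, b, hab, by simp, by simp⟩
  induction h with
  | refl => exact .refl
  | tail _ h ih => exact ih.tail (h.imp (step _ _) (step _ _))

theorem CommEquiv.mem_of_forall_commStep {C : List B → Prop}
    (hC : ∀ l l', CommStep M l l' → C l → C l') (h : CommEquiv M l l') (hl : C l) : C l' := by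
  induction h with
  | refl => exact hl
  | tail _ h ih => exact hC _ _ (h.elim id CommStep.symm) ih

end CommEquiv

/-- A class of words that is closed under prefixes and commutations, and in which no word ends
with a square or with a braid word of length at least three. -/
structure BraidFree {B : Type*} (M : CoxeterMatrix B) (C : List B → Prop) : Prop where
  of_append : ∀ l r, C (l ++ r) → C l
  commStep : ∀ l l', CommStep M l l' → C l → C l'
  not_square : ∀ l i, ¬ C (l ++ [i, i])
  not_braidWord : ∀ l i j, 3 ≤ M i j → ¬ C (l ++ braidWord M i j)

namespace BraidFree

variable {B W : Type*} [Group W] {M : CoxeterMatrix B} {cs : CoxeterSystem M W}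
  {C : List B → Prop}

theorem commEquiv (hC : BraidFree M C) {l l' : List B} (hl : C l) (hred : cs.IsReduced l)
    (hred' : cs.IsReduced l') (h : cs.wordProd l = cs.wordProd l') : CommEquiv M l l' := by
  induction hN : l.length generalizing l l' with
  | zero =>
    obtain rfl := List.length_eq_zero_iff.1 hN
    have hlen : l'.length = 0 := by rw [← hred', ← h, hred, hN]
    obtain rfl := List.length_eq_zero_iff.1 hlen
    exact .refl
  | succ N ih =>
    have hlen : l'.length = N + 1 := by rw [← hred', ← h, hred, hN]
    rcases l.eq_nil_or_concat' with rfl | ⟨l₁, s, rfl⟩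
    · simp at hN
    rcases l'.eq_nil_or_concat' with rfl | ⟨l₂, t, rfl⟩
    · simp at hlen
    have hl₁ := hC.of_append _ _ hl
    have cancel : ∀ {u r u' : List B}, cs.wordProd (u ++ r) = cs.wordProd (u' ++ r) →
        cs.wordProd u = cs.wordProd u' := by
      intro u r u' h
      rw [wordProd_append, wordProd_append] at h
      exact mul_right_cancel h
    have redOf : ∀ {u r : List B}, cs.IsReduced (u ++ r) → cs.IsReduced u := by
      intro u r h
      simpa using h.take u.length
    simp only [List.length_append, List.length_cons, List.length_nil, zero_add,
      Nat.add_right_cancel_iff] at hN hlen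
    rcases eq_or_ne s t with rfl | hst
    · exact (ih hl₁ (redOf hred) (redOf hred') (cancel h) hN).append_right _
    have hs := hred.isRightDescent_concat
    have ht := hred'.isRightDescent_concat
    rw [← h] at ht
    obtain ⟨hM0, u, hu, huw⟩ := exists_isReduced_append_braidWord ht hs
    have hM1 := M.off_diagonal t s hst.symm
    obtain ⟨m, hm⟩ : ∃ m, M t s = m + 1 := Nat.exists_eq_succ_of_ne_zero hM0
    have hbr : u ++ braidWord M t s = u ++ alternatingWord s t m ++ [s] := by
      rw [braidWord, hm, alternatingWord_succ, List.concat_eq_append, List.append_assoc]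
    have h1 : CommEquiv M (l₁ ++ [s]) (u ++ braidWord M t s) := by
      rw [hbr] at hu huw ⊢
      exact (ih hl₁ (redOf hred) (redOf hu) (cancel huw.symm) hN).append_right _
    have h2 := h1.mem_of_forall_commStep hC.commStep hl
    obtain rfl : m = 1 := by
      by_contra hne
      exact hC.not_braidWord u t s (by omega) h2
    have hts : u ++ braidWord M t s = u ++ [t, s] := by
      rw [braidWord, hm]
      rfl
    rw [hts] at hu huw h1 h2
    have hstep : CommStep M (u ++ [t, s]) (u ++ [s, t]) := ⟨u, [], t, s, hm, rfl, rfl⟩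
    have hprod : cs.wordProd (u ++ [s, t]) = cs.wordProd (u ++ [t, s]) := by
      have := cs.wordProd_braidWord_eq t s
      rw [braidWord, braidWord, M.symmetric s t, hm] at this
      rw [wordProd_append, wordProd_append]
      exact congrArg _ this.symm
    have hu' : cs.IsReduced (u ++ [s, t]) := by
      rw [CoxeterSystem.IsReduced, hprod, hu]
      simp
    have h3 := hC.commStep _ _ hstep h2
    have hsplit : u ++ [s, t] = u ++ [s] ++ [t] := by simp
    have hN' : (u ++ [s]).length = N := by
      have : (u ++ [t, s]).length = N + 1 := by
        rw [← hu, huw, hred]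
        simp [hN]
      simpa using this
    refine (h1.tail (Or.inl hstep)).trans ?_
    rw [hsplit] at hu' h3 hprod ⊢
    exact (ih (hC.of_append _ _ h3) (redOf hu') (redOf hred')
      (cancel (hprod.trans (huw.trans h))) hN').append_right _

theorem isReduced (hC : BraidFree M C) (cs : CoxeterSystem M W) {l : List B} (hl : C l) :
    cs.IsReduced l := by
  induction l using List.reverseRecOn with
  | nil => simp [CoxeterSystem.IsReduced]
  | append_singleton l s ih =>
    have hl₁ := hC.of_append _ _ hl
    have hred := ih hl₁
    rcases cs.length_mul_simple (cs.wordProd l) s with h | h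
    · rw [CoxeterSystem.IsReduced, wordProd_append, wordProd_singleton, h, hred]
      simp
    · exfalso
      obtain ⟨l₂, hl₂, hprod⟩ := cs.exists_isReduced (cs.wordProd l * cs.simple s)
      have hprod' : cs.wordProd l = cs.wordProd (l₂ ++ [s]) := by
        rw [wordProd_append, wordProd_singleton, ← hprod, simple_mul_simple_cancel_right]
      have hred' : cs.IsReduced (l₂ ++ [s]) := by
        rw [CoxeterSystem.IsReduced, ← hprod', ← h, hprod, hl₂]
        simp
      have := ((hC.commEquiv hl₁ hred hred' hprod').append_right [s]).mem_of_forall_commStep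
        hC.commStep hl
      rw [List.append_assoc] at this
      exact hC.not_square _ _ this

theorem fullyCommutative (hC : BraidFree M C) (cs : CoxeterSystem M W) {l : List B} (hl : C l) :
    FullyCommutative cs (cs.wordProd l) := fun _ _ h₁ hw₁ h₂ hw₂ =>
  (hC.commEquiv hl (hC.isReduced cs hl) h₁ hw₁.symm).symm.trans
    (hC.commEquiv hl (hC.isReduced cs hl) h₂ hw₂.symm)

end BraidFree

/-- Every prefix of the word satisfies the relation `P` between its numbers of letters `x`
and `y`. -/
def PrefixCount {B : Type*} [DecidableEq B] (P : ℕ → ℕ → Prop) (x y : B) (l : List B) : Prop :=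
  ∀ m, P ((l.take m).count x) ((l.take m).count y)

namespace PrefixCount

variable {B : Type*} [DecidableEq B] {M : CoxeterMatrix B} {P : ℕ → ℕ → Prop} {x y : B}
  {l l' r : List B}

theorem of_append (h : PrefixCount P x y (l ++ r)) : PrefixCount P x y l := by
  intro m
  have := h (min m l.length)
  rwa [List.take_append_of_le_length (min_le_right _ _), ← List.take_take,
    List.take_length] at this

theorem take_right (h : PrefixCount P x y (l ++ r)) (m : ℕ) :
    P (l.count x + (r.take m).count x) (l.count y + (r.take m).count y) := by
  have := h (l.length + m)
  rwa [List.take_length_add_append, List.count_append, List.count_append] at this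

theorem append (hl : PrefixCount P x y l)
    (hr : ∀ m, P (l.count x + (r.take m).count x) (l.count y + (r.take m).count y)) :
    PrefixCount P x y (l ++ r) := by
  intro m
  rcases le_total m l.length with h | h
  · rw [List.take_append_of_le_length h]
    exact hl m
  · obtain ⟨m, rfl⟩ := Nat.exists_eq_add_of_le h
    rw [List.take_length_add_append, List.count_append, List.count_append]
    exact hr m

theorem commStep (hxy : M x y ≠ 2) (hll : CommStep M l l') (h : PrefixCount P x y l) :
    PrefixCount P x y l' := by
  obtain ⟨u, w, s, t, hst, rfl, rfl⟩ := hll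
  refine append h.of_append fun m => ?_
  match m with
  | 0 => exact h.take_right 0
  | 1 =>
    have h0 := h.take_right 0
    have h2 := h.take_right 2
    have hne : s ≠ t := by
      rintro rfl
      simp at hst
    by_cases ht : t = x ∨ t = y
    · have hs : s ≠ x ∧ s ≠ y := by
        constructor <;> rintro rfl <;> rcases ht with rfl | rfl
        · exact hne rfl
        · exact hxy hst
        · exact hxy (by rwa [M.symmetric])
        · exact hne rfl
      simpa [List.count_cons, hs.1, hs.2] using h2
    · rw [not_or] at ht
      simpa [List.count_cons, ht.1, ht.2] using h0
  | m + 2 =>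
    have := h.take_right (m + 2)
    simpa [List.count_cons, add_assoc, add_comm, add_left_comm] using this

theorem flatten_replicate (hP : ∀ c d, P c d → P (l.count x + c) (l.count y + d)) (h0 : P 0 0)
    (h : PrefixCount P x y l) (k : ℕ) : PrefixCount P x y (List.replicate k l).flatten := by
  induction k with
  | zero => simpa [PrefixCount] using h0
  | succ k ih =>
    rw [List.replicate_succ, List.flatten_cons]
    exact h.append fun m => hP _ _ (ih m)

end PrefixCount

/-- The counting conditions satisfied by all words that are commutation equivalent to prefixes of
powers of `a b v₀ ⋯ vₙ₋₁ vₙ vₙ₋₁ ⋯ v₀`. -/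
structure IsZigzagWord {B : Type*} [DecidableEq B] (n : ℕ) (a b : B) (v : ℕ → B)
    (l : List B) : Prop where
  mem : ∀ x ∈ l, x = a ∨ x = b ∨ ∃ i ≤ n, x = v i
  left : PrefixCount (fun c d => d ≤ 2 * c ∧ 2 * c ≤ d + 2) a (v 0) l
  right : PrefixCount (fun c d => d ≤ 2 * c ∧ 2 * c ≤ d + 2) b (v 0) l
  path : ∀ i, i + 2 ≤ n →
    PrefixCount (fun c d => d ≤ c + c % 2 ∧ c ≤ d + c % 2) (v i) (v (i + 1)) l
  last : PrefixCount (fun c d => 2 * d ≤ c + 1 ∧ c ≤ 2 * d + 1) (v (n - 1)) (v n) l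

namespace IsZigzagWord

variable {B : Type*} [DecidableEq B] {M : CoxeterMatrix B} {n : ℕ} {a b : B} {v : ℕ → B}
  {l l' r : List B}

theorem of_append (h : IsZigzagWord n a b v (l ++ r)) : IsZigzagWord n a b v l where
  mem x hx := h.mem x (List.mem_append_left _ hx)
  left := h.left.of_append
  right := h.right.of_append
  path i hi := (h.path i hi).of_append
  last := h.last.of_append

theorem commStep (hMa : M a (v 0) = 3) (hMb : M b (v 0) = 3)
    (hMpath : ∀ i, i + 2 ≤ n → M (v i) (v (i + 1)) = 3) (hM4 : M (v (n - 1)) (v n) = 4)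
    (hll : CommStep M l l') (h : IsZigzagWord n a b v l) : IsZigzagWord n a b v l' where
  mem := by
    obtain ⟨u, w, s, t, -, rfl, rfl⟩ := hll
    intro x hx
    apply h.mem
    simp only [List.mem_append, List.mem_cons] at hx ⊢
    tauto
  left := h.left.commStep (by omega) hll
  right := h.right.commStep (by omega) hll
  path i hi := (h.path i hi).commStep (by have := hMpath i hi; omega) hll
  last := h.last.commStep (by omega) hll

theorem swap (h : IsZigzagWord n a b v l) : IsZigzagWord n b a v l where
  mem x hx := by
    have := h.mem x hx
    tauto
  left := h.right
  right := h.left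
  path := h.path
  last := h.last

theorem not_square_leaf (hav : ∀ i ≤ n, a ≠ v i) : ¬ IsZigzagWord n a b v (l ++ [a, a]) := by
  intro h
  have h0 := h.left.take_right 0
  have h2 := h.left.take_right 2
  simp [hav 0] at h0 h2
  omega

theorem even_count (hvinj : Set.InjOn v (Set.Iic n)) (hbv : ∀ i ≤ n, b ≠ v i)
    {i : ℕ} (hi : i < n) (h : IsZigzagWord n a b v (l ++ [v i, v i])) : Even (l.count (v i)) := by
  rw [Nat.even_iff]
  have hv : ∀ {i j}, i ≤ n → j ≤ n → (v i = v j ↔ i = j) := fun hi hj => hvinj.eq_iff hi hj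
  rcases i with _ | i
  · have h0 := h.right.take_right 0
    have h2 := h.right.take_right 2
    simp [(hbv 0 n.zero_le).symm] at h0 h2
    omega
  · have h0 := (h.path i hi).take_right 0
    have h1 := (h.path i hi).take_right 1
    have h2 := (h.path i hi).take_right 2
    have : v (i + 1) ≠ v i := by
      rw [Ne, hv] <;> omega
    simp [this] at h0 h1 h2
    omega

theorem not_square_path (hn : 1 ≤ n) (hvinj : Set.InjOn v (Set.Iic n)) (hbv : ∀ i ≤ n, b ≠ v i)
    {i : ℕ} (hi : i ≤ n) : ¬ IsZigzagWord n a b v (l ++ [v i, v i]) := by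
  intro h
  have hv : ∀ {i j}, i ≤ n → j ≤ n → (v i = v j ↔ i = j) := fun hi hj => hvinj.eq_iff hi hj
  rcases hi.eq_or_lt with rfl | hi
  · have h0 := h.last.take_right 0
    have h2 := h.last.take_right 2
    have : v i ≠ v (i - 1) := by
      rw [Ne, hv] <;> omega
    simp [this] at h0 h2
    omega
  · have heven := Nat.even_iff.1 (even_count hvinj hbv hi h)
    rcases (Nat.succ_le_of_lt hi).eq_or_lt with rfl | hi'
    · have h0 := h.last.take_right 0
      have h2 := h.last.take_right 2
      have : v i ≠ v (i + 1) := by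
        rw [Ne, hv] <;> omega
      simp [this] at h0 h2
      omega
    · have h0 := (h.path i hi').take_right 0
      have h2 := (h.path i hi').take_right 2
      have : v i ≠ v (i + 1) := by
        rw [Ne, hv] <;> omega
      simp [this] at h0 h2
      omega

theorem not_square (hn : 1 ≤ n) (hvinj : Set.InjOn v (Set.Iic n)) (hav : ∀ i ≤ n, a ≠ v i)
    (hbv : ∀ i ≤ n, b ≠ v i) (x : B) : ¬ IsZigzagWord n a b v (l ++ [x, x]) := by
  intro h
  rcases h.mem x (by simp) with rfl | rfl | ⟨i, hi, rfl⟩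
  · exact not_square_leaf hav h
  · exact not_square_leaf hbv h.swap
  · exact not_square_path hn hvinj hbv hi h

theorem not_braid_leaf (hab : a ≠ b) (hav : a ≠ v 0) (hbv : b ≠ v 0) :
    ¬ IsZigzagWord n a b v (l ++ [a, v 0, a]) ∧ ¬ IsZigzagWord n a b v (l ++ [v 0, a, v 0]) := by
  constructor <;> intro h
  all_goals
    have h0 := h.left.take_right 0
    have h1 := h.left.take_right 1
    have h2 := h.left.take_right 2
    have h3 := h.left.take_right 3
    have h0' := h.right.take_right 0
    have h3' := h.right.take_right 3
    simp [hab, hav, hav.symm, hbv.symm] at h0 h1 h2 h3 h0' h3'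
    omega

theorem not_braid_path {i : ℕ} (hi : i + 2 ≤ n) (hv : v i ≠ v (i + 1)) :
    ¬ IsZigzagWord n a b v (l ++ [v i, v (i + 1), v i]) ∧
      ¬ IsZigzagWord n a b v (l ++ [v (i + 1), v i, v (i + 1)]) := by
  constructor <;> intro h
  all_goals
    have h0 := (h.path i hi).take_right 0
    have h1 := (h.path i hi).take_right 1
    have h2 := (h.path i hi).take_right 2
    have h3 := (h.path i hi).take_right 3
    simp [hv, hv.symm] at h0 h1 h2 h3
    omega

theorem not_braid_last (hv : v (n - 1) ≠ v n) :
    ¬ IsZigzagWord n a b v (l ++ [v (n - 1), v n, v (n - 1), v n]) ∧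
      ¬ IsZigzagWord n a b v (l ++ [v n, v (n - 1), v n, v (n - 1)]) := by
  constructor <;> intro h
  all_goals
    have h0 := h.last.take_right 0
    have h1 := h.last.take_right 1
    have h2 := h.last.take_right 2
    have h3 := h.last.take_right 3
    have h4 := h.last.take_right 4
    simp [hv, hv.symm] at h0 h1 h2 h3 h4
    omega

theorem not_braidWord (hn : 1 ≤ n) (hvinj : Set.InjOn v (Set.Iic n)) (hab : a ≠ b)
    (hav : ∀ i ≤ n, a ≠ v i) (hbv : ∀ i ≤ n, b ≠ v i) (hMa : M a (v 0) = 3) (hMb : M b (v 0) = 3)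
    (hMpath : ∀ i, i + 2 ≤ n → M (v i) (v (i + 1)) = 3) (hM4 : M (v (n - 1)) (v n) = 4)
    (hMab : M a b = 2) (hMa2 : ∀ i, 1 ≤ i → i ≤ n → M a (v i) = 2 ∧ M b (v i) = 2)
    (hMfar : ∀ i j, i + 2 ≤ j → j ≤ n → M (v i) (v j) = 2) {x y : B} (hxy : 3 ≤ M x y) :
    ¬ IsZigzagWord n a b v (l ++ braidWord M x y) := by
  have hne : ∀ i, i + 1 ≤ n → v i ≠ v (i + 1) := fun i hi h => by
    have := hvinj (Set.mem_Iic.2 (Nat.le_of_succ_le hi)) hi h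
    omega
  have hsub : n - 1 + 1 = n := Nat.sub_add_cancel hn
  have three : ∀ {x y : B}, M x y = 3 → braidWord M x y = [y, x, y] := fun h => by
    rw [braidWord, h]
    rfl
  have four : ∀ {x y : B}, M x y = 4 → braidWord M x y = [x, y, x, y] := fun h => by
    rw [braidWord, h]
    rfl
  have symm3 : ∀ {x y : B}, M x y = 3 → M y x = 3 := fun h => by rwa [M.symmetric]
  have symm4 : ∀ {x y : B}, M x y = 4 → M y x = 4 := fun h => by rwa [M.symmetric]
  have hleaf := not_braid_leaf (n := n) (l := l) hab (hav 0 n.zero_le) (hbv 0 n.zero_le)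
  have hleaf' := not_braid_leaf (n := n) (l := l) hab.symm (hbv 0 n.zero_le) (hav 0 n.zero_le)
  have hlast := not_braid_last (n := n) (a := a) (b := b) (l := l) (v := v)
    (by have := hne (n - 1) (by omega); rwa [hsub] at this)
  intro h
  have hmem : ∀ z ∈ [x, y], z = a ∨ z = b ∨ ∃ i ≤ n, z = v i := by
    intro z hz
    apply h.mem
    apply List.mem_append_right
    obtain ⟨m, hm⟩ := Nat.exists_eq_add_of_le' hxy
    rw [braidWord, hm, alternatingWord_succ, alternatingWord_succ]
    simp only [List.mem_cons, List.not_mem_nil, or_false] at hz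
    rcases hz with rfl | rfl <;> simp
  have key : ∀ {i j}, i < j → j ≤ n → 3 ≤ M (v i) (v j) →
      ¬ IsZigzagWord n a b v (l ++ braidWord M (v i) (v j)) ∧
      ¬ IsZigzagWord n a b v (l ++ braidWord M (v j) (v i)) := by
    intro i j hij hj hM
    obtain rfl : j = i + 1 := by
      by_contra hcon
      have := hMfar i j (by omega) hj
      omega
    rcases hj.eq_or_lt with rfl | hj
    · rw [Nat.add_sub_cancel] at hM4 hlast
      rw [four hM4, four (symm4 hM4)]
      exact hlast
    · rw [three (hMpath i hj), three (symm3 (hMpath i hj))]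
      exact (not_braid_path hj (hne i (by omega))).symm
  have leaf : ∀ {i}, i ≤ n → 3 ≤ M a (v i) ∨ 3 ≤ M b (v i) → i = 0 := by
    intro i hi hM
    by_contra hcon
    have := hMa2 i (by omega) hi
    omega
  rcases hmem x (by simp) with rfl | rfl | ⟨i, hi, rfl⟩ <;>
    rcases hmem y (by simp) with rfl | rfl | ⟨j, hj, rfl⟩
  · simp at hxy
  · omega
  · obtain rfl := leaf hj (Or.inl hxy)
    rw [three hMa] at h
    exact hleaf.2 h
  · rw [M.symmetric] at hxy
    omega
  · simp at hxy
  · obtain rfl := leaf hj (Or.inr hxy)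
    rw [three hMb] at h
    exact hleaf'.2 h.swap
  · obtain rfl := leaf hi (Or.inl (by rwa [M.symmetric]))
    rw [three (symm3 hMa)] at h
    exact hleaf.1 h
  · obtain rfl := leaf hi (Or.inr (by rwa [M.symmetric]))
    rw [three (symm3 hMb)] at h
    exact hleaf'.1 h.swap
  · rcases lt_trichotomy i j with hij | rfl | hij
    · exact (key hij hj hxy).1 h
    · simp at hxy
    · rw [M.symmetric] at hxy
      exact (key hij hi hxy).2 h

theorem braidFree (hn : 1 ≤ n) (hvinj : Set.InjOn v (Set.Iic n)) (hab : a ≠ b)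
    (hav : ∀ i ≤ n, a ≠ v i) (hbv : ∀ i ≤ n, b ≠ v i) (hMa : M a (v 0) = 3) (hMb : M b (v 0) = 3)
    (hMpath : ∀ i, i + 2 ≤ n → M (v i) (v (i + 1)) = 3) (hM4 : M (v (n - 1)) (v n) = 4)
    (hMab : M a b = 2) (hMa2 : ∀ i, 1 ≤ i → i ≤ n → M a (v i) = 2 ∧ M b (v i) = 2)
    (hMfar : ∀ i j, i + 2 ≤ j → j ≤ n → M (v i) (v j) = 2) :
    BraidFree M (IsZigzagWord n a b v) where
  of_append _ _ h := h.of_append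
  commStep _ _ hll h := h.commStep hMa hMb hMpath hM4 hll
  not_square _ x := not_square hn hvinj hav hbv x
  not_braidWord _ _ _ hxy :=
    not_braidWord hn hvinj hab hav hbv hMa hMb hMpath hM4 hMab hMa2 hMfar hxy

theorem count_map_range (hvinj : Set.InjOn v (Set.Iic n)) {i N : ℕ} (hi : i ≤ n)
    (hN : N ≤ n + 1) : ((List.range N).map v).count (v i) = if i < N then 1 else 0 := by
  induction N with
  | zero => simp
  | succ N ih =>
    have : v N = v i ↔ N = i := hvinj.eq_iff (Nat.le_of_succ_le_succ hN) hi
    rw [List.range_succ, List.map_append, List.count_append, ih (by omega), List.map_singleton,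
      List.count_singleton]
    simp only [beq_iff_eq, this]
    split_ifs <;> omega

theorem count_map_range_sub (hvinj : Set.InjOn v (Set.Iic n)) {i N : ℕ} (hi : i ≤ n)
    (hN : N ≤ n) : ((List.range N).map fun j => v (n - 1 - j)).count (v i) =
      if i < n ∧ n ≤ i + N then 1 else 0 := by
  induction N with
  | zero =>
    simp
  | succ N ih =>
    have : v (n - 1 - N) = v i ↔ n - 1 - N = i :=
      hvinj.eq_iff (Set.mem_Iic.2 (by omega)) hi
    rw [List.range_succ, List.map_append, List.count_append, ih (by omega), List.map_singleton,
      List.count_singleton]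
    simp only [beq_iff_eq, this]
    split_ifs <;> omega

end IsZigzagWord

section ZigzagBlock

variable {B : Type*} {n : ℕ} {a b : B} {v : ℕ → B}

/-- The word `a b v₀ ⋯ vₙ₋₁ vₙ vₙ₋₁ ⋯ v₀`. -/
abbrev zigzagBlock (n : ℕ) (a b : B) (v : ℕ → B) : List B :=
  a :: b :: (List.map v (List.range (n + 1)) ++ List.map (fun i => v (n - 1 - i)) (List.range n))

variable [DecidableEq B]

theorem count_take_zigzagBlock (hvinj : Set.InjOn v (Set.Iic n)) (hav : ∀ i ≤ n, a ≠ v i)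
    (hbv : ∀ i ≤ n, b ≠ v i) {i : ℕ} (hi : i ≤ n) (m : ℕ) :
    ((zigzagBlock n a b v).take m).count (v i) =
      (if i + 2 < m then 1 else 0) + if i < n ∧ 2 * n + 2 < i + m then 1 else 0 := by
  match m with
  | 0 =>
    simp
    omega
  | 1 =>
    simp [hav i hi]
    omega
  | m + 2 =>
    simp only [zigzagBlock, List.take_succ_cons, List.take_append, List.length_map,
      List.length_range, ← List.map_take, List.take_range, List.count_cons, List.count_append,
      beq_iff_eq, hav i hi, hbv i hi, if_false, add_zero]
    rw [IsZigzagWord.count_map_range hvinj hi (min_le_right _ _),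
      IsZigzagWord.count_map_range_sub hvinj hi (min_le_right _ _)]
    split_ifs <;> omega

theorem count_zigzagBlock (hvinj : Set.InjOn v (Set.Iic n)) (hav : ∀ i ≤ n, a ≠ v i)
    (hbv : ∀ i ≤ n, b ≠ v i) {i : ℕ} (hi : i ≤ n) :
    (zigzagBlock n a b v).count (v i) = if i < n then 2 else 1 := by
  have := count_take_zigzagBlock hvinj hav hbv hi (2 * n + 3)
  rw [List.take_of_length_le (by simp; omega)] at this
  rw [this]
  split_ifs <;> omega

theorem count_take_zigzagBlock_fst (hab : a ≠ b) (hav : ∀ i ≤ n, a ≠ v i) (m : ℕ) :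
    ((zigzagBlock n a b v).take m).count a = if 0 < m then 1 else 0 := by
  cases m with
  | zero => simp
  | succ m =>
    rw [zigzagBlock, List.take_succ_cons, List.count_cons_self, List.count_eq_zero.2]
    · simp
    · intro h
      have := List.mem_of_mem_take h
      simp only [List.mem_cons, List.mem_append, List.mem_map, List.mem_range] at this
      rcases this with h | ⟨i, hi, h⟩ | ⟨i, hi, h⟩
      · exact hab h
      · exact hav _ (by omega) h.symm
      · exact hav _ (by omega) h.symm

theorem count_take_zigzagBlock_snd (hab : a ≠ b) (hbv : ∀ i ≤ n, b ≠ v i) (m : ℕ) :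
    ((zigzagBlock n a b v).take m).count b = if 1 < m then 1 else 0 := by
  match m with
  | 0 => simp
  | 1 => simp [hab]
  | m + 2 =>
    rw [zigzagBlock, List.take_succ_cons, List.count_cons_of_ne hab, List.take_succ_cons,
      List.count_cons_self, List.count_eq_zero.2]
    · simp
    · intro h
      have := List.mem_of_mem_take h
      simp only [List.mem_append, List.mem_map, List.mem_range] at this
      rcases this with ⟨i, hi, h⟩ | ⟨i, hi, h⟩
      · exact hbv _ (by omega) h.symm
      · exact hbv _ (by omega) h.symm

theorem count_zigzagBlock_fst (hab : a ≠ b) (hav : ∀ i ≤ n, a ≠ v i) :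
    (zigzagBlock n a b v).count a = 1 := by
  have := count_take_zigzagBlock_fst hab hav (2 * n + 3)
  rw [List.take_of_length_le (by simp; omega)] at this
  simpa using this

theorem count_zigzagBlock_snd (hab : a ≠ b) (hbv : ∀ i ≤ n, b ≠ v i) :
    (zigzagBlock n a b v).count b = 1 := by
  have := count_take_zigzagBlock_snd hab hbv (2 * n + 3)
  rw [List.take_of_length_le (by simp; omega)] at this
  simpa using this

theorem isZigzagWord_flatten_replicate (hn : 1 ≤ n) (hvinj : Set.InjOn v (Set.Iic n))
    (hab : a ≠ b) (hav : ∀ i ≤ n, a ≠ v i) (hbv : ∀ i ≤ n, b ≠ v i) (k : ℕ) :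
    IsZigzagWord n a b v (List.replicate k (zigzagBlock n a b v)).flatten where
  mem x hx := by
    obtain ⟨l, hl, hx⟩ := List.mem_flatten.1 hx
    rw [List.eq_of_mem_replicate hl] at hx
    simp only [zigzagBlock, List.mem_cons, List.mem_append, List.mem_map, List.mem_range] at hx
    rcases hx with h | h | ⟨i, hi, rfl⟩ | ⟨i, hi, rfl⟩
    · exact Or.inl h
    · exact Or.inr (Or.inl h)
    · exact Or.inr (Or.inr ⟨_, by omega, rfl⟩)
    · exact Or.inr (Or.inr ⟨_, by omega, rfl⟩)
  left := by
    refine PrefixCount.flatten_replicate (fun c d h => ?_) (by simp) (fun m => ?_) k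
    · rw [count_zigzagBlock_fst hab hav, count_zigzagBlock hvinj hav hbv n.zero_le,
        if_pos (by omega)]
      omega
    · rw [count_take_zigzagBlock_fst hab hav, count_take_zigzagBlock hvinj hav hbv n.zero_le]
      split_ifs <;> omega
  right := by
    refine PrefixCount.flatten_replicate (fun c d h => ?_) (by simp) (fun m => ?_) k
    · rw [count_zigzagBlock_snd hab hbv, count_zigzagBlock hvinj hav hbv n.zero_le,
        if_pos (by omega)]
      omega
    · rw [count_take_zigzagBlock_snd hab hbv, count_take_zigzagBlock hvinj hav hbv n.zero_le]
      split_ifs <;> omega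
  path i hi := by
    refine PrefixCount.flatten_replicate (fun c d h => ?_) (by simp) (fun m => ?_) k
    · rw [count_zigzagBlock hvinj hav hbv (by omega), count_zigzagBlock hvinj hav hbv (by omega),
        if_pos (by omega), if_pos (by omega)]
      omega
    · rw [count_take_zigzagBlock hvinj hav hbv (by omega),
        count_take_zigzagBlock hvinj hav hbv (by omega)]
      split_ifs <;> omega
  last := by
    refine PrefixCount.flatten_replicate (fun c d h => ?_) (by simp) (fun m => ?_) k
    · rw [count_zigzagBlock hvinj hav hbv (n.sub_le 1), count_zigzagBlock hvinj hav hbv le_rfl,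
        if_neg (lt_irrefl n), if_pos (by omega)]
      omega
    · rw [count_take_zigzagBlock hvinj hav hbv (n.sub_le 1),
        count_take_zigzagBlock hvinj hav hbv le_rfl]
      split_ifs <;> omega

end ZigzagBlock

theorem List.getElem_flatten_replicate {α : Type*} (l : List α) (k : ℕ) {j : ℕ}
    (hj : j < (List.replicate k l).flatten.length) (hj' : j % l.length < l.length) :
    (List.replicate k l).flatten[j] = l[j % l.length] := by
  induction k generalizing j with
  | zero => simp at hj
  | succ k ih =>
    simp only [List.replicate_succ, List.flatten_cons, List.getElem_append]
    split_ifs with h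
    · simp only [Nat.mod_eq_of_lt h]
    · rw [ih]
      · simp only [← Nat.mod_eq_sub_mod (not_lt.1 h)]
      · rwa [← Nat.mod_eq_sub_mod (not_lt.1 h)]

section Heap

variable {B : Type*} {M : CoxeterMatrix B} {ω : List B}

theorem heapLe.le {i j : Fin ω.length} (h : heapLe M ω i j) : i ≤ j := by
  induction h with
  | refl => exact le_rfl
  | tail _ h ih => exact ih.trans h.1.le

theorem heapLe_of_lt_of_ne_two {i j : Fin ω.length} (hij : i < j)
    (hM : M (ω.get i) (ω.get j) ≠ 2) : heapLe M ω i j :=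
  Relation.ReflTransGen.single ⟨hij, hM⟩

/-- A set of positions is a chain of the heap as soon as each of its elements lies above its
predecessor. -/
theorem heapLe_of_forall_exists_pred {p : Fin ω.length → Prop}
    (h : ∀ i j, p i → p j → i < j → ∃ j', p j' ∧ i ≤ j' ∧ j' < j ∧ M (ω.get j') (ω.get j) ≠ 2)
    {i j : Fin ω.length} (hi : p i) (hj : p j) (hij : i ≤ j) : heapLe M ω i j := by
  induction j using WellFoundedLT.induction with
  | ind j ih =>
    rcases hij.eq_or_lt with rfl | hlt
    · exact .refl
    · obtain ⟨j', hj', hle, hlt', hM⟩ := h i j hi hj hlt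
      exact (ih j' hlt' hj' hle).tail ⟨hlt', hM⟩

/-- A heap that is covered by two chains has no antichain with more than two elements. -/
theorem IsHeapAntichain.card_le_two {p : Fin ω.length → Prop}
    (hp : ∀ i j, p i → p j → i ≤ j → heapLe M ω i j)
    (hp' : ∀ i j, ¬ p i → ¬ p j → i ≤ j → heapLe M ω i j) {A : Finset (Fin ω.length)}
    (hA : IsHeapAntichain M ω A) : A.card ≤ 2 := by
  classical
  have card_le_one : ∀ (q : Fin ω.length → Prop) [DecidablePred q],
      (∀ i j, q i → q j → i ≤ j → heapLe M ω i j) → (A.filter q).card ≤ 1 := by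
    intro q _ hq
    refine Finset.card_le_one.2 fun i hi j hj => ?_
    rw [Finset.mem_filter] at hi hj
    by_contra hne
    rcases le_total i j with hij | hij
    · exact hA i hi.1 j hj.1 hne (hq i j hi.2 hj.2 hij)
    · exact hA j hj.1 i hi.1 (Ne.symm hne) (hq j i hj.2 hi.2 hij)
  have h1 := card_le_one p hp
  have h2 := card_le_one (fun i => ¬ p i) hp'
  rw [← Finset.card_filter_add_card_filter_not (s := A) p]
  omega

end Heap

section ZigzagHeap

variable {B : Type*} {M : CoxeterMatrix B} {n : ℕ} {a b : B} {v : ℕ → B} {k : ℕ}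

theorem length_zigzagBlock : (zigzagBlock n a b v).length = 2 * n + 3 := by
  simp
  omega

theorem getElem_zigzagBlock {r : ℕ} (h : r + 2 < (zigzagBlock n a b v).length) :
    (zigzagBlock n a b v)[r + 2] = if r ≤ n then v r else v (2 * n - r) := by
  simp only [zigzagBlock, List.getElem_cons_succ, List.getElem_append, List.length_map,
    List.length_range, List.getElem_map, List.getElem_range, Nat.lt_succ_iff]
  split_ifs
  · rfl
  · congr 1
    omega

theorem get_zigzag (j : Fin (List.replicate k (zigzagBlock n a b v)).flatten.length) :
    (List.replicate k (zigzagBlock n a b v)).flatten.get j =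
      (zigzagBlock n a b v)[(j : ℕ) % (2 * n + 3)]'(by
        rw [length_zigzagBlock]
        exact Nat.mod_lt _ (by omega)) := by
  have hlen := length_zigzagBlock (n := n) (a := a) (b := b) (v := v)
  rw [List.get_eq_getElem, List.getElem_flatten_replicate _ _ _
    (by rw [hlen]; exact Nat.mod_lt _ (by omega))]
  simp only [hlen]

theorem get_zigzag_eq_fst {j : Fin (List.replicate k (zigzagBlock n a b v)).flatten.length}
    (hj : (j : ℕ) % (2 * n + 3) = 0) :
    (List.replicate k (zigzagBlock n a b v)).flatten.get j = a := by
  simp only [get_zigzag, hj]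
  rfl

theorem get_zigzag_eq_snd {j : Fin (List.replicate k (zigzagBlock n a b v)).flatten.length}
    (hj : (j : ℕ) % (2 * n + 3) = 1) :
    (List.replicate k (zigzagBlock n a b v)).flatten.get j = b := by
  simp only [get_zigzag, hj]
  rfl

theorem get_zigzag_eq_path {j : Fin (List.replicate k (zigzagBlock n a b v)).flatten.length}
    {r : ℕ} (hj : (j : ℕ) % (2 * n + 3) = r + 2) :
    (List.replicate k (zigzagBlock n a b v)).flatten.get j =
      if r ≤ n then v r else v (2 * n - r) := by
  simp only [get_zigzag, hj, getElem_zigzagBlock]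

theorem exists_pred_zigzag (hMa : M a (v 0) = 3)
    (hMpath : ∀ i, i + 2 ≤ n → M (v i) (v (i + 1)) = 3) (hM4 : M (v (n - 1)) (v n) = 4)
    {j : Fin (List.replicate k (zigzagBlock n a b v)).flatten.length} (hj0 : 0 < (j : ℕ))
    (hj : (j : ℕ) % (2 * n + 3) ≠ 1) :
    ∃ j' : Fin (List.replicate k (zigzagBlock n a b v)).flatten.length,
      (j' : ℕ) % (2 * n + 3) ≠ 1 ∧ j' < j ∧
      (∀ i < (j : ℕ), i % (2 * n + 3) ≠ 1 → i ≤ j') ∧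
      M ((List.replicate k (zigzagBlock n a b v)).flatten.get j')
        ((List.replicate k (zigzagBlock n a b v)).flatten.get j) ≠ 2 := by
  have hadj : ∀ i, i + 1 ≤ n → M (v i) (v (i + 1)) ≠ 2 := by
    intro i hi
    rcases hi.eq_or_lt with rfl | hi
    · rw [Nat.add_sub_cancel] at hM4
      omega
    · rw [hMpath i hi]
      omega
  have hadj' : ∀ i, i + 1 ≤ n → M (v (i + 1)) (v i) ≠ 2 := fun i hi => by
    rw [M.symmetric]
    exact hadj i hi
  obtain ⟨j, hjlt⟩ := j
  simp only at hj0 hj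
  have hdiv := Nat.div_add_mod j (2 * n + 3)
  have hlt := Nat.mod_lt j (show 2 * n + 3 > 0 by omega)
  set q := j / (2 * n + 3)
  obtain hr | ⟨r, hr⟩ : j % (2 * n + 3) = 0 ∨ ∃ r, j % (2 * n + 3) = r + 2 := by
    rcases hr : j % (2 * n + 3) with _ | _ | r
    · exact Or.inl rfl
    · exact absurd hr hj
    · exact Or.inr ⟨r, rfl⟩
  · obtain ⟨q', hq⟩ : ∃ q', q = q' + 1 := Nat.exists_eq_succ_of_ne_zero (by
      rintro h
      rw [h] at hdiv
      omega)
    rw [hq, mul_add] at hdiv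
    have hmod : (j - 1) % (2 * n + 3) = 2 * n + 2 := by
      rw [show j - 1 = (2 * n + 2) + (2 * n + 3) * q' by omega, Nat.add_mul_mod_self_left,
        Nat.mod_eq_of_lt (by omega)]
    refine ⟨⟨j - 1, by omega⟩, by simp only [hmod]; omega, ?_, fun i (hi : i < j) _ => ?_, ?_⟩
    · rw [Fin.lt_def]
      simp only
      omega
    · simp only
      omega
    · rw [get_zigzag_eq_fst (j := ⟨j, hjlt⟩) hr, get_zigzag_eq_path (j := ⟨j - 1, _⟩) hmod,
        M.symmetric]
      have : (if 2 * n ≤ n then v (2 * n) else v (2 * n - 2 * n)) = v 0 := by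
        split_ifs
        · congr 1
          omega
        · simp
      rw [this, hMa]
      omega
  · have hmod' : ∀ s, s ≤ r + 2 → (j - s) % (2 * n + 3) = r + 2 - s := fun s hs => by
      rw [show j - s = (r + 2 - s) + (2 * n + 3) * q by omega, Nat.add_mul_mod_self_left,
        Nat.mod_eq_of_lt (by omega)]
    rcases r with _ | r
    · have hmod := hmod' 2 (by omega)
      refine ⟨⟨j - 2, by omega⟩, by simp only [hmod]; omega, ?_, fun i (hi : i < j) hib => ?_, ?_⟩
      · rw [Fin.lt_def]
        simp only
        omega
      · simp only
        by_contra hcon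
        rw [show i = j - 1 by omega] at hib
        exact hib (hmod' 1 (by omega))
      · rw [get_zigzag_eq_fst (j := ⟨j - 2, _⟩) hmod, get_zigzag_eq_path (j := ⟨j, hjlt⟩) hr,
          if_pos n.zero_le, hMa]
        omega
    · have hmod := hmod' 1 (by omega)
      refine ⟨⟨j - 1, by omega⟩, by simp only [hmod]; omega, ?_, fun i (hi : i < j) _ => ?_, ?_⟩
      · rw [Fin.lt_def]
        simp only
        omega
      · simp only
        omega
      · rw [get_zigzag_eq_path (j := ⟨j - 1, _⟩) (r := r) hmod,
          get_zigzag_eq_path (j := ⟨j, hjlt⟩) hr]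
        rcases lt_trichotomy r n with h | rfl | h
        · rw [if_pos h.le, if_pos (Nat.succ_le_of_lt h)]
          exact hadj r h
        · rw [if_pos le_rfl, if_neg (by omega)]
          have := hadj' (r - 1) (by omega)
          rw [show r - 1 + 1 = r by omega] at this
          rwa [show 2 * r - (r + 1) = r - 1 by omega]
        · rw [if_neg (by omega), if_neg (by omega)]
          have := hadj' (2 * n - (r + 1)) (by omega)
          rwa [show 2 * n - (r + 1) + 1 = 2 * n - r by omega] at this

theorem heapN_zigzag (hMa : M a (v 0) = 3)
    (hMpath : ∀ i, i + 2 ≤ n → M (v i) (v (i + 1)) = 3) (hM4 : M (v (n - 1)) (v n) = 4)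
    (hMab : M a b = 2) (hk : 1 ≤ k) :
    heapN M (List.replicate k (zigzagBlock n a b v)).flatten = 2 := by
  set ω := (List.replicate k (zigzagBlock n a b v)).flatten with hω
  have hlen : 2 ≤ ω.length := by
    simp only [hω, List.length_flatten, List.map_replicate, List.sum_replicate,
      length_zigzagBlock, smul_eq_mul]
    nlinarith
  refine IsGreatest.csSup_eq ⟨?_, ?_⟩
  · let i₀ : Fin ω.length := ⟨0, by omega⟩
    let i₁ : Fin ω.length := ⟨1, by omega⟩
    have hne : i₀ ≠ i₁ := by simp [i₀, i₁, Fin.ext_iff]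
    have h0 : ω.get i₀ = a := get_zigzag_eq_fst (Nat.zero_mod _)
    have h1 : ω.get i₁ = b := get_zigzag_eq_snd (Nat.mod_eq_of_lt (show 1 < 2 * n + 3 by omega))
    have h01 : ¬ heapLe M ω i₀ i₁ := by
      intro h
      rcases h.cases_tail with h | ⟨c, -, hlt, hM⟩
      · exact hne h.symm
      · have : c = i₀ := Fin.ext (Nat.lt_one_iff.1 hlt)
        rw [this, h0, h1] at hM
        exact hM hMab
    have h10 : ¬ heapLe M ω i₁ i₀ := fun h => by
      have := Fin.le_def.1 h.le
      simp [i₀, i₁] at this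
    refine ⟨{i₀, i₁}, ?_, Finset.card_pair hne⟩
    intro i hi j hj hij
    simp only [Finset.mem_insert, Finset.mem_singleton] at hi hj
    rcases hi with rfl | rfl <;> rcases hj with rfl | rfl
    · exact absurd rfl hij
    · exact h01
    · exact h10
    · exact absurd rfl hij
  · rintro _ ⟨A, hA, rfl⟩
    refine hA.card_le_two (p := fun i => (i : ℕ) % (2 * n + 3) = 1) (fun i j hi hj hij => ?_)
      (fun i j hi hj hij => heapLe_of_forall_exists_pred
        (p := fun i => (i : ℕ) % (2 * n + 3) ≠ 1) (fun i j hi hj hij => ?_) hi hj hij)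
    · rcases hij.eq_or_lt with rfl | hij
      · exact .refl
      · refine heapLe_of_lt_of_ne_two hij ?_
        rw [get_zigzag_eq_snd hi, get_zigzag_eq_snd hj, M.diagonal]
        omega
    · obtain ⟨j', hj', hlt, hmax, hM⟩ :=
        exists_pred_zigzag hMa hMpath hM4 (j := j) (Nat.zero_lt_of_lt hij) hj
      exact ⟨j', hj', hmax i hij hi, hlt, hM⟩

end ZigzagHeap

/-- in the affine `B`-type diagram (leaves `a, b` attached to `v 0`, path
`v 0 — v 1 — ⋯ — v n` with last edge of weight 4 and all other edges of weight 3), for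
every `k ≥ 1` the word `w_k = (a b v₀ v₁ ⋯ v_{n-1} v_n v_{n-1} ⋯ v₁ v₀)^k` is a reduced
word of a fully commutative element and the maximal antichain size of its heap is 2. -/
theorem stmt17 {B W : Type*} [Group W] {M : CoxeterMatrix B} (cs : CoxeterSystem M W)
    (n : ℕ) (hn : 1 ≤ n) (a b : B) (v : ℕ → B)
    (hvinj : Set.InjOn v (Set.Iic n)) (hab : a ≠ b)
    (hav : ∀ i ≤ n, a ≠ v i) (hbv : ∀ i ≤ n, b ≠ v i)
    (hMa : M a (v 0) = 3) (hMb : M b (v 0) = 3)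
    (hMpath : ∀ i, i + 2 ≤ n → M (v i) (v (i + 1)) = 3)
    (hM4 : M (v (n - 1)) (v n) = 4)
    (hMab : M a b = 2)
    (hMa2 : ∀ i, 1 ≤ i → i ≤ n → M a (v i) = 2 ∧ M b (v i) = 2)
    (hMfar : ∀ i j, i + 2 ≤ j → j ≤ n → M (v i) (v j) = 2)
    (k : ℕ) (hk : 1 ≤ k) :
    cs.IsReduced ((List.replicate k
        (a :: b :: (List.map v (List.range (n + 1)) ++
          List.map (fun i => v (n - 1 - i)) (List.range n)))).flatten) ∧
    FullyCommutative cs (cs.wordProd ((List.replicate k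
        (a :: b :: (List.map v (List.range (n + 1)) ++
          List.map (fun i => v (n - 1 - i)) (List.range n)))).flatten)) ∧
    heapN M ((List.replicate k
        (a :: b :: (List.map v (List.range (n + 1)) ++
          List.map (fun i => v (n - 1 - i)) (List.range n)))).flatten) = 2 := by
  classical
  have hC := IsZigzagWord.braidFree hn hvinj hab hav hbv hMa hMb hMpath hM4 hMab hMa2 hMfar
  have hw := isZigzagWord_flatten_replicate hn hvinj hab hav hbv k
  exact ⟨hC.isReduced cs hw, hC.fullyCommutative cs hw, heapN_zigzag hMa hMpath hM4 hMab hk⟩
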